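/- arXiv:2603.15379 — 5 statements merged into one kernel-verified Lean document; each statement's English description precedes it below -/
import Mathlib

section
/- The relation R between compact timed words and K_a is surjective: for every κ ∈ K_a there exists a compact timed word ρ̃ with ρ̃ R κ. (For finite κ, any such ρ̃ has length (|κ| + 1)/2, which is a natural number since |κ| is odd.) -/
/-! The witness for `κ` takes, at each even index `2i`, a word listing the letters of the finite
nonempty set `η_{2i}`, stamped with the unique point of `ι_{2i}` (`KElem.toCompact`). Disjointness
and order of the intervals make the timestamps strictly increasing, and for infinite `κ` the cover
of `ℝ≥0` makes them diverge. A finite `κ` has odd length `2m + 1`, because its last interval is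
punctual and odd-indexed intervals are not (`KElem.exists_len_eq`); the witness then has
length `m + 1`. The length claim is arithmetic, using that `κ` is nonempty: this rules out the
degenerate case `n = 0`, where `2 * n - 1` truncates to `0`. -/

/-! Core definitions: timed words, compact timed words, MTL, semantics. -/

/-- Timed words over an alphabet `A`: finite or infinite (`len : ℕ∞`) sequences of
actions with monotonically nondecreasing nonnegative timestamps; infinite timed
words are time-divergent. -/
structure TimedWord (A : Type) where
  len : ℕ∞
  act : ℕ → A
  time : ℕ → ℝ
  nonneg : ∀ i : ℕ, (i : ℕ∞) < len → 0 ≤ time i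
  mono : ∀ i j : ℕ, i ≤ j → (j : ℕ∞) < len → time i ≤ time j
  div : len = ⊤ → ∀ M : ℝ, ∃ i : ℕ, M < time i

/-- `μ(ρ)`: the last timestamp of a finite timed word. -/
def TimedWord.last {A : Type} (ρ : TimedWord A) : ℝ := ρ.time (ρ.len.toNat - 1)

/-- `t` belongs to the time domain of `ρ` (all of `ℝ≥0`, or `[0, μ(ρ)]` if `ρ` is finite). -/
def TimedWord.inDom {A : Type} (ρ : TimedWord A) (t : ℝ) : Prop :=
  0 ≤ t ∧ (ρ.len ≠ ⊤ → t ≤ ρ.last)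

/-- Intervals of `ℝ≥0` with endpoints in `ℕ ∪ {∞}`. -/
structure TimeIntv where
  lo : ℕ
  hi : ℕ∞
  loOpen : Bool
  hiOpen : Bool

/-- Membership of a real number in a `TimeIntv`. -/
def TimeIntv.mem (I : TimeIntv) (x : ℝ) : Prop :=
  (if I.loOpen then (I.lo : ℝ) < x else (I.lo : ℝ) ≤ x) ∧
  (∀ n : ℕ, I.hi = (n : ℕ∞) → if I.hiOpen then x < (n : ℝ) else x ≤ (n : ℝ))

/-- MTL formulas: `φ ::= a | ¬φ | φ ∧ ψ | φ U_I ψ`. -/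
inductive MTL (A : Type) : Type
  | atom : A → MTL A
  | neg : MTL A → MTL A
  | conj : MTL A → MTL A → MTL A
  | untl : MTL A → TimeIntv → MTL A → MTL A

/-- Pointwise semantics `ρ, i ⊨_pw φ` of MTL over timed words. -/
def pwSat {A : Type} (ρ : TimedWord A) : MTL A → ℕ → Prop
  | .atom a, i => ρ.act i = a
  | .neg φ, i => ¬ pwSat ρ φ i
  | .conj φ ψ, i => pwSat ρ φ i ∧ pwSat ρ ψ i
  | .untl φ I ψ, i => ∃ j : ℕ, i < j ∧ (j : ℕ∞) < ρ.len ∧ I.mem (ρ.time j - ρ.time i) ∧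
      pwSat ρ ψ j ∧ ∀ k : ℕ, i < k → k < j → pwSat ρ φ k

/-- Interval-based timed-word semantics `ρ, t ⊨_itw φ` of MTL over timed words. -/
def itwSat {A : Type} (ρ : TimedWord A) : MTL A → ℝ → Prop
  | .atom a, t => ∃ i : ℕ, (i : ℕ∞) < ρ.len ∧ ρ.act i = a ∧ ρ.time i = t
  | .neg φ, t => ¬ itwSat ρ φ t
  | .conj φ ψ, t => itwSat ρ φ t ∧ itwSat ρ ψ t
  | .untl φ I ψ, t => ∃ t' : ℝ, t < t' ∧ ρ.inDom t' ∧ I.mem (t' - t) ∧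
      itwSat ρ ψ t' ∧ ∀ t'' : ℝ, t < t'' → t'' < t' → itwSat ρ φ t''

/-- Compact timed words: finite or infinite sequences of nonempty finite words over `A`
together with strictly increasing nonnegative timestamps (time-divergent if infinite). -/
structure CompactTW (A : Type) where
  len : ℕ∞
  word : ℕ → List A
  time : ℕ → ℝ
  nonneg : ∀ i : ℕ, (i : ℕ∞) < len → 0 ≤ time i
  word_ne : ∀ i : ℕ, (i : ℕ∞) < len → word i ≠ []
  strict : ∀ i j : ℕ, i < j → (j : ℕ∞) < len → time i < time j
  div : len = ⊤ → ∀ M : ℝ, ∃ i : ℕ, M < time i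

/-- `μ(ρ̃)`: the last timestamp of a finite compact timed word. -/
def CompactTW.last {A : Type} (ρ : CompactTW A) : ℝ := ρ.time (ρ.len.toNat - 1)

/-- `t` is a timestamp of `ρ̃` (i.e. `ind_ρ̃(t)` is defined). -/
def CompactTW.IsStamp {A : Type} (ρ : CompactTW A) (t : ℝ) : Prop :=
  ∃ i : ℕ, (i : ℕ∞) < ρ.len ∧ ρ.time i = t

open Classical in
/-- `ρ̃(t)`: the word `σ̃_i` if `τ̃_i = t` for some `i`, and the empty word otherwise. -/
noncomputable def CompactTW.atTime {A : Type} (ρ : CompactTW A) (t : ℝ) : List A :=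
  if h : ∃ i : ℕ, (i : ℕ∞) < ρ.len ∧ ρ.time i = t then ρ.word h.choose else []

/-- Lexicographic order on pairs `(t, j)`. -/
def LexLt (t : ℝ) (j : ℕ) (t' : ℝ) (j' : ℕ) : Prop := t < t' ∨ (t = t' ∧ j < j')

/-- Admissible pairs `(t, j)` for the mixed semantics over `ρ̃`:
`t ∈ ℝ≥0` (with `t ≤ μ(ρ̃)` if `ρ̃` is finite) and `0 ≤ j < max 1 |ρ̃(t)|`. -/
def CompactTW.Adm {A : Type} (ρ : CompactTW A) (t : ℝ) (j : ℕ) : Prop :=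
  0 ≤ t ∧ (ρ.len ≠ ⊤ → t ≤ ρ.last) ∧ j < max 1 (ρ.atTime t).length

/-- The start index of the `k`-th block, given block-end indices `s`. -/
def bstart (s : ℕ → ℕ) : ℕ → ℕ
  | 0 => 0
  | k + 1 => s k + 1

/-- The `k`-th block of actions `σ_{start k} … σ_{s k}` of a timed word. -/
def blockWord {A : Type} (ρ : TimedWord A) (s : ℕ → ℕ) (k : ℕ) : List A :=
  (List.range (s k + 1 - bstart s k)).map fun m => ρ.act (bstart s k + m)

/-- `ρc` is the compaction `C(ρ)` of `ρ`, witnessed by the sequence `s = sτ` of the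
indices of the last elements of the maximal constant factors of `τ`:
blocks are nonoverlapping, consecutive, cover all of `ρ`, carry a constant
timestamp, and `ρc` records exactly their action words and timestamps. -/
def IsCompactionWith {A : Type} (ρ : TimedWord A) (ρc : CompactTW A) (s : ℕ → ℕ) : Prop :=
  (∀ k : ℕ, (k : ℕ∞) < ρc.len →
      ((s k : ℕ∞) < ρ.len ∧ ρc.time k = ρ.time (s k) ∧ ρc.word k = blockWord ρ s k ∧
        ∀ i : ℕ, bstart s k ≤ i → i ≤ s k → ρ.time i = ρ.time (s k))) ∧
  (∀ k : ℕ, ((k + 1 : ℕ) : ℕ∞) < ρc.len → s k < s (k + 1)) ∧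
  (∀ i : ℕ, (i : ℕ∞) < ρ.len → ∃ k : ℕ, (k : ℕ∞) < ρc.len ∧ bstart s k ≤ i ∧ i ≤ s k)

/-- `ρc = C(ρ)`. -/
def IsCompaction {A : Type} (ρ : TimedWord A) (ρc : CompactTW A) : Prop :=
  ∃ s : ℕ → ℕ, IsCompactionWith ρ ρc s

/-- MTL extended with the atom `φ_Σ`. -/
inductive MTLS (A : Type) : Type
  | atom : A → MTLS A
  | sig : MTLS A
  | neg : MTLS A → MTLS A
  | conj : MTLS A → MTLS A → MTLS A
  | untl : MTLS A → TimeIntv → MTLS A → MTLS A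

/-- Disjunction, as the usual abbreviation. -/
def MTLS.disj {A : Type} (φ ψ : MTLS A) : MTLS A := .neg (.conj (.neg φ) (.neg ψ))

/-- Mixed semantics `ρ̃, t, j ⊨_mx φ` of MTL extended with `φ_Σ` over compact timed words. -/
def mxSat {A : Type} (ρ : CompactTW A) : MTLS A → ℝ → ℕ → Prop
  | .atom a, t, j => (ρ.atTime t)[j]? = some a
  | .sig, t, _ => ρ.atTime t ≠ []
  | .neg φ, t, j => ¬ mxSat ρ φ t j
  | .conj φ ψ, t, j => mxSat ρ φ t j ∧ mxSat ρ ψ t j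
  | .untl φ I ψ, t, j => ∃ (t₁ : ℝ) (j₁ : ℕ), LexLt t j t₁ j₁ ∧ ρ.Adm t₁ j₁ ∧
      I.mem (t₁ - t) ∧ mxSat ρ ψ t₁ j₁ ∧
      ∀ (t₂ : ℝ) (j₂ : ℕ), LexLt t j t₂ j₂ → LexLt t₂ j₂ t₁ j₁ → ρ.Adm t₂ j₂ →
        mxSat ρ φ t₂ j₂

/-- The pointwise compilation `⟨·⟩` of MTL into MTL extended with `φ_Σ`. -/
def pcompile {A : Type} : MTL A → MTLS A
  | .atom a => .atom a
  | .neg φ => .conj .sig (.neg (pcompile φ))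
  | .conj φ ψ => .conj .sig (.conj (pcompile φ) (pcompile ψ))
  | .untl φ I ψ =>
      .conj .sig (.untl (MTLS.disj (pcompile φ) (.neg .sig)) I (.conj (pcompile ψ) .sig))

/-- MTL extended with the atom `β`. -/
inductive MTLB (A : Type) : Type
  | atom : A → MTLB A
  | beta : MTLB A
  | neg : MTLB A → MTLB A
  | conj : MTLB A → MTLB A → MTLB A
  | untl : MTLB A → TimeIntv → MTLB A → MTLB A

def MTLB.disj {A : Type} (φ ψ : MTLB A) : MTLB A := .neg (.conj (.neg φ) (.neg ψ))

/-- `⊤`, encoded as the tautology `¬(β ∧ ¬β)`. -/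
def MTLB.top {A : Type} : MTLB A := .neg (.conj .beta (.neg .beta))

/-- Mixed semantics of MTL extended with `β` (`β` holds at `(t,j)` iff `j = 0`). -/
def mxSatB {A : Type} (ρ : CompactTW A) : MTLB A → ℝ → ℕ → Prop
  | .atom a, t, j => (ρ.atTime t)[j]? = some a
  | .beta, _, j => j = 0
  | .neg φ, t, j => ¬ mxSatB ρ φ t j
  | .conj φ ψ, t, j => mxSatB ρ φ t j ∧ mxSatB ρ ψ t j
  | .untl φ I ψ, t, j => ∃ (t₁ : ℝ) (j₁ : ℕ), LexLt t j t₁ j₁ ∧ ρ.Adm t₁ j₁ ∧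
      I.mem (t₁ - t) ∧ mxSatB ρ ψ t₁ j₁ ∧
      ∀ (t₂ : ℝ) (j₂ : ℕ), LexLt t j t₂ j₂ → LexLt t₂ j₂ t₁ j₁ → ρ.Adm t₂ j₂ →
        mxSatB ρ φ t₂ j₂

/-- The interval compilation `⟦·⟧` of MTL into MTL extended with `β`. -/
def icompile {A : Type} : MTL A → MTLB A
  | .atom a => MTLB.disj (.atom a) (.untl MTLB.top ⟨0, (0 : ℕ∞), false, false⟩ (.atom a))
  | .neg φ => .neg (icompile φ)
  | .conj φ ψ => .conj (icompile φ) (icompile ψ)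
  | .untl φ I ψ => .untl (MTLB.disj (.neg .beta) (icompile φ)) I (.conj .beta (icompile ψ))

/-- Elements `κ = (η, ι)` of `K_a`: equal-length sequences of action sets `η_i ⊆ Σ`
and intervals `ι_i` of `ℝ≥0` forming a consecutive partition of an initial segment
of `ℝ≥0` (all of `ℝ≥0` in the infinite case), with even-indexed intervals punctual
carrying a nonempty action set, odd-indexed intervals non-punctual carrying the
empty action set, and (for finite `κ`) a punctual last interval. -/
structure KElem (A : Type) where
  len : ℕ∞
  eta : ℕ → Set A
  iv : ℕ → Set ℝ
  iv_conn : ∀ i : ℕ, (i : ℕ∞) < len → (iv i).OrdConnected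
  iv_nonneg : ∀ i : ℕ, (i : ℕ∞) < len → iv i ⊆ Set.Ici (0 : ℝ)
  iv_nonempty : ∀ i : ℕ, (i : ℕ∞) < len → (iv i).Nonempty
  iv_ordered : ∀ i j : ℕ, i < j → (j : ℕ∞) < len → ∀ x ∈ iv i, ∀ y ∈ iv j, x < y
  initialSeg : ∀ x y : ℝ, (∃ i : ℕ, (i : ℕ∞) < len ∧ x ∈ iv i) → 0 ≤ y → y ≤ x →
      ∃ i : ℕ, (i : ℕ∞) < len ∧ y ∈ iv i
  zero_cov : ∃ i : ℕ, (i : ℕ∞) < len ∧ (0 : ℝ) ∈ iv i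
  inf_cover : len = ⊤ → ∀ x : ℝ, 0 ≤ x → ∃ i : ℕ, x ∈ iv i
  even_punct : ∀ i : ℕ, ((2 * i : ℕ) : ℕ∞) < len →
      (∃ t : ℝ, iv (2 * i) = {t}) ∧ (eta (2 * i)).Nonempty
  odd_nonpunct : ∀ i : ℕ, ((2 * i + 1 : ℕ) : ℕ∞) < len →
      (¬ ∃ t : ℝ, iv (2 * i + 1) = {t}) ∧ eta (2 * i + 1) = ∅
  last_punct : ∀ n : ℕ, len = ((n + 1 : ℕ) : ℕ∞) → ∃ t : ℝ, iv n = {t}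

/-- The relation `R` between compact timed words and elements of `K_a`. -/
def Rrel {A : Type} (ρ : CompactTW A) (κ : KElem A) : Prop :=
  ((ρ.len = ⊤ ∧ κ.len = ⊤) ∨
    ∃ n : ℕ, ρ.len = (n : ℕ∞) ∧ κ.len = ((2 * n - 1 : ℕ) : ℕ∞)) ∧
  ∀ i : ℕ, (i : ℕ∞) < ρ.len →
    ({a | a ∈ ρ.word i} = κ.eta (2 * i) ∧ κ.iv (2 * i) = {ρ.time i})

/-- The signal `F(ρ)` induced by a timed word: `F(ρ)(t) = {a | ∃ i, σ_i = a ∧ τ_i = t}`. -/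
def sigOf {A : Type} (ρ : TimedWord A) : ℝ → Set A :=
  fun t => {a | ∃ i : ℕ, (i : ℕ∞) < ρ.len ∧ ρ.act i = a ∧ ρ.time i = t}

/-- The domain of the signal `F(ρ)`: `ℝ≥0`, or `[0, μ(ρ)]` if `ρ` is finite. -/
def sigDom {A : Type} (ρ : TimedWord A) : Set ℝ :=
  if ρ.len = ⊤ then Set.Ici (0 : ℝ) else Set.Icc 0 ρ.last

/-- Interval-based signal semantics `s, t ⊨_its φ` (over a signal with domain `dom`). -/
def itsSat {A : Type} (dom : Set ℝ) (s : ℝ → Set A) : MTL A → ℝ → Prop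
  | .atom a, t => a ∈ s t
  | .neg φ, t => ¬ itsSat dom s φ t
  | .conj φ ψ, t => itsSat dom s φ t ∧ itsSat dom s ψ t
  | .untl φ I ψ, t => ∃ t' : ℝ, t < t' ∧ t' ∈ dom ∧ I.mem (t' - t) ∧
      itsSat dom s ψ t' ∧ ∀ t'' : ℝ, t < t'' → t'' < t' → itsSat dom s φ t''

/-- The pointwise language `L_pw(φ)`. -/
def Lpw {A : Type} (φ : MTL A) : Set (TimedWord A) :=
  {ρ | (0 : ℕ∞) < ρ.len ∧ pwSat ρ φ 0}

/-- The interval-based language `L_itw(φ)`. -/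
def Litw {A : Type} (φ : MTL A) : Set (TimedWord A) :=
  {ρ | (0 : ℕ∞) < ρ.len ∧ itwSat ρ φ 0}

/-- `⊤`, encoded as the tautology `¬(b ∧ ¬b)`. -/
def mtop {A : Type} (b : A) : MTL A := .neg (.conj (.atom b) (.neg (.atom b)))

/-- `◇_I φ := ⊤ U_I φ`. -/
def ev {A : Type} (b : A) (I : TimeIntv) (φ : MTL A) : MTL A := .untl (mtop b) I φ

/-- `γ₂ = ◇_{(0,1]}(◇_{[0,1)} b ∧ ◇_{[1,1]} c)`. -/
def gamma2 {A : Type} (b c : A) : MTL A :=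
  ev b ⟨0, (1 : ℕ∞), true, false⟩
    (.conj (ev b ⟨0, (1 : ℕ∞), false, true⟩ (.atom b))
           (ev b ⟨1, (1 : ℕ∞), false, false⟩ (.atom c)))

/-- The language `B`: infinite timed words with positions `i < j`, `τ_i ∈ (0,2)`,
`σ_i = b`, `τ_j ∈ (1,2]`, `σ_j = c`, and `τ_j − τ_i ∈ (0,1)`. -/
def Bset {A : Type} (b c : A) : Set (TimedWord A) :=
  {ρ | ρ.len = ⊤ ∧ ∃ i j : ℕ, i < j ∧
    0 < ρ.time i ∧ ρ.time i < 2 ∧ ρ.act i = b ∧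
    1 < ρ.time j ∧ ρ.time j ≤ 2 ∧ ρ.act j = c ∧
    0 < ρ.time j - ρ.time i ∧ ρ.time j - ρ.time i < 1}

/-- The language `Z`: infinite timed words with a position `i ≥ 1` where `b` is
immediately followed by `a`. -/
def Zset {A : Type} (a b : A) : Set (TimedWord A) :=
  {ρ | ρ.len = ⊤ ∧ ∃ i : ℕ, 1 ≤ i ∧ ρ.act i = b ∧ ρ.act (i + 1) = a}

/-- The language `G`: infinite timed words with no timestamp in `(0,2]`. -/
def Gset {A : Type} : Set (TimedWord A) :=
  {ρ | ρ.len = ⊤ ∧ ∀ i : ℕ, ¬ (0 < ρ.time i ∧ ρ.time i ≤ 2)}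

/-- `m_ρ̃`: `m(0, j) = j` and `m(k+1, j) = sτ_k + j + 1`. -/
def mfun (s : ℕ → ℕ) : ℕ → ℕ → ℕ
  | 0, j => j
  | k + 1, j => s k + j + 1

lemma KElem.sSup_mem_iv {A : Type} (κ : KElem A) {i : ℕ} (hi : ((2 * i : ℕ) : ℕ∞) < κ.len) :
    sSup (κ.iv (2 * i)) ∈ κ.iv (2 * i) := by
  obtain ⟨t, ht⟩ := (κ.even_punct i hi).1
  simp [ht]

/-- The compact timed word read off the even positions of `κ`: the `i`-th word lists the letters of
`η_{2i}`, and the `i`-th timestamp is the unique point of `ι_{2i}` (encoded as its supremum).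
The length `L` is a parameter, so that the finite and infinite cases share one construction. -/
noncomputable def KElem.toCompact {A : Type} [Fintype A] (κ : KElem A) (L : ℕ∞)
    (hL : ∀ i : ℕ, (i : ℕ∞) < L → ((2 * i : ℕ) : ℕ∞) < κ.len)
    (htop : L = ⊤ → κ.len = ⊤) : CompactTW A where
  len := L
  word i := (Set.toFinite (κ.eta (2 * i))).toFinset.toList
  time i := sSup (κ.iv (2 * i))
  nonneg i hi := κ.iv_nonneg _ (hL i hi) (κ.sSup_mem_iv (hL i hi))
  word_ne i hi := by
    have h := (κ.even_punct i (hL i hi)).2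
    simpa [Finset.toList_eq_nil, Set.nonempty_iff_ne_empty] using h
  strict i j hij hj := by
    have hi : (i : ℕ∞) < L := lt_trans (by exact_mod_cast hij) hj
    exact κ.iv_ordered (2 * i) (2 * j) (by omega) (hL j hj) _ (κ.sSup_mem_iv (hL i hi)) _
      (κ.sSup_mem_iv (hL j hj))
  div h M := by
    -- The point `max M 0` lies in some `ι_i`, which precedes the later even interval `ι_{2(i+1)}`.
    obtain ⟨i, hi⟩ := κ.inf_cover (htop h) (max M 0) (le_max_right _ _)
    have hlt : ((2 * (i + 1) : ℕ) : ℕ∞) < κ.len := by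
      rw [htop h]; exact ENat.natCast_lt_top _
    exact ⟨i + 1, (le_max_left M 0).trans_lt
      (κ.iv_ordered i (2 * (i + 1)) (by omega) hlt _ hi _ (κ.sSup_mem_iv hlt))⟩

/-- The positional part of `R` holds for `κ.toCompact L`, whatever the admissible length `L`. -/
lemma KElem.toCompact_spec {A : Type} [Fintype A] (κ : KElem A) (L : ℕ∞)
    (hL : ∀ i : ℕ, (i : ℕ∞) < L → ((2 * i : ℕ) : ℕ∞) < κ.len)
    (htop : L = ⊤ → κ.len = ⊤) (i : ℕ) (hi : (i : ℕ∞) < L) :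
    {a | a ∈ (κ.toCompact L hL htop).word i} = κ.eta (2 * i) ∧
      κ.iv (2 * i) = {(κ.toCompact L hL htop).time i} := by
  refine ⟨by ext a; simp [KElem.toCompact], ?_⟩
  obtain ⟨t, ht⟩ := (κ.even_punct i (hL i hi)).1
  simp [KElem.toCompact, ht]

lemma KElem.len_ne_zero {A : Type} (κ : KElem A) : κ.len ≠ 0 := by
  obtain ⟨i, hi, -⟩ := κ.zero_cov
  exact (zero_le.trans_lt hi).ne'

/-- A finite `κ` has odd length: its last interval is punctual, whereas the odd-indexed ones are
not, so its last index is even. -/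
lemma KElem.exists_len_eq {A : Type} (κ : KElem A) (n : ℕ) (hn : κ.len = n) :
    ∃ m : ℕ, n = 2 * m + 1 := by
  have hn0 : n ≠ 0 := by
    rintro rfl
    exact κ.len_ne_zero (by simpa using hn)
  obtain ⟨k, rfl⟩ := Nat.exists_eq_succ_of_ne_zero hn0
  rcases Nat.even_or_odd' k with ⟨m, rfl | rfl⟩
  · exact ⟨m, rfl⟩
  · refine absurd (κ.last_punct _ hn) (κ.odd_nonpunct m ?_).1
    rw [hn]
    exact_mod_cast Nat.lt_succ_self _

/-- the relation `R` between compact timed words and `K_a` is surjective;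
moreover any compact timed word related to a finite `κ` has length `(|κ| + 1) / 2`. -/
theorem Rrel_surjective (A : Type) [Fintype A] :
    (∀ κ : KElem A, ∃ ρc : CompactTW A, Rrel ρc κ) ∧
    (∀ (κ : KElem A) (n : ℕ), κ.len = (n : ℕ∞) →
      ∀ ρc : CompactTW A, Rrel ρc κ → ρc.len = (((n + 1) / 2 : ℕ) : ℕ∞)) := by
  refine ⟨fun κ => ?_, ?_⟩
  · rcases eq_or_ne κ.len ⊤ with htop | hfin
    · exact ⟨κ.toCompact ⊤ (fun i _ => htop ▸ ENat.natCast_lt_top _) (fun _ => htop),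
        Or.inl ⟨rfl, htop⟩, κ.toCompact_spec _ _ _⟩
    · obtain ⟨n, hn⟩ := ENat.ne_top_iff_exists.mp hfin
      obtain ⟨m, rfl⟩ := κ.exists_len_eq n hn.symm
      refine ⟨κ.toCompact ((m + 1 : ℕ) : ℕ∞) (fun i hi => ?_)
          (fun h => absurd h (ENat.natCast_ne_top _)),
        Or.inr ⟨m + 1, rfl, ?_⟩, κ.toCompact_spec _ _ _⟩
      · rw [← hn]
        have hi' : i < m + 1 := by exact_mod_cast hi
        exact_mod_cast (by omega : 2 * i < 2 * m + 1)
      · rw [← hn]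
        congr 1
  · rintro κ n hn ρc ⟨⟨-, h⟩ | ⟨m, hm, h⟩, -⟩
    · exact absurd (hn.symm.trans h) (ENat.natCast_ne_top n)
    · obtain ⟨k, hk⟩ := κ.exists_len_eq n hn
      have hnm : n = 2 * m - 1 := by exact_mod_cast hn.symm.trans h
      rw [hm]
      congr 1
      omega
end

section
/- The compilation ⟨·⟩ translates pointwise semantics into mixed semantics at the initial position: for every MTL formula φ and every compact timed word ρ̃ = (σ̃, τ̃), if τ̃_0 = 0 then ρ̃, 0, 0 ⊨_mx ⟨φ⟩ if and only if C⁻¹(ρ̃), 0 ⊨_pw φ; and if τ̃_0 ≠ 0 then ρ̃, 0, 0 ⊭_mx ⟨φ⟩. -/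
/-! ### Blocks, positions and indices -/

theorem CompactTW.time_inj {A : Type} (ρ : CompactTW A) {k l : ℕ} (hk : (k : ℕ∞) < ρ.len)
    (hl : (l : ℕ∞) < ρ.len) (h : ρ.time k = ρ.time l) : k = l := by
  rcases lt_trichotomy k l with hlt | heq | hgt
  · exact absurd h (ρ.strict k l hlt hl).ne
  · exact heq
  · exact absurd h (ρ.strict l k hgt hk).ne'

/-- Timestamps are pairwise distinct, so the index chosen in `atTime` is the expected one. -/
theorem CompactTW.atTime_time {A : Type} (ρ : CompactTW A) {k : ℕ} (hk : (k : ℕ∞) < ρ.len) :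
    ρ.atTime (ρ.time k) = ρ.word k := by
  have h : ∃ i : ℕ, (i : ℕ∞) < ρ.len ∧ ρ.time i = ρ.time k := ⟨k, hk, rfl⟩
  unfold CompactTW.atTime
  rw [dif_pos h, ρ.time_inj h.choose_spec.1 hk h.choose_spec.2]

theorem CompactTW.exists_of_atTime_ne {A : Type} (ρ : CompactTW A) {t : ℝ}
    (h : ρ.atTime t ≠ []) : ∃ k : ℕ, (k : ℕ∞) < ρ.len ∧ ρ.time k = t := by
  by_contra hn
  exact h (dif_neg hn)

theorem CompactTW.time_le_last {A : Type} (ρ : CompactTW A) {k : ℕ} (hk : (k : ℕ∞) < ρ.len)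
    (hfin : ρ.len ≠ ⊤) : ρ.time k ≤ ρ.last := by
  obtain ⟨n, hn⟩ := ENat.ne_top_iff_exists.mp hfin
  have hkn : k < n := by rw [← hn] at hk; exact_mod_cast hk
  have hlast : ρ.last = ρ.time (n - 1) := by simp [CompactTW.last, ← hn]
  rw [hlast]
  rcases (Nat.le_sub_one_of_lt hkn).eq_or_lt with h | h
  · rw [h]
  · refine (ρ.strict k (n - 1) h ?_).le
    rw [← hn]
    exact_mod_cast Nat.sub_lt (by omega) one_pos

theorem CompactTW.adm_time {A : Type} (ρ : CompactTW A) {k j : ℕ} (hk : (k : ℕ∞) < ρ.len)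
    (hj : j < (ρ.word k).length) : ρ.Adm (ρ.time k) j :=
  ⟨ρ.nonneg k hk, ρ.time_le_last hk, by rw [ρ.atTime_time hk]; exact lt_max_of_lt_right hj⟩

theorem CompactTW.Adm.exists_block {A : Type} {ρ : CompactTW A} {t : ℝ} {j : ℕ}
    (h : ρ.Adm t j) (hne : ρ.atTime t ≠ []) :
    ∃ k : ℕ, (k : ℕ∞) < ρ.len ∧ ρ.time k = t ∧ j < (ρ.word k).length := by
  obtain ⟨k, hk, rfl⟩ := ρ.exists_of_atTime_ne hne
  refine ⟨k, hk, rfl, ?_⟩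
  have h3 := h.2.2
  rw [ρ.atTime_time hk] at h3
  have := List.length_pos_of_ne_nil (ρ.word_ne k hk)
  omega

namespace IsCompactionWith

variable {A : Type} {ρ : TimedWord A} {ρc : CompactTW A} {s : ℕ → ℕ}

theorem word_length (h : IsCompactionWith ρ ρc s) {k : ℕ} (hk : (k : ℕ∞) < ρc.len) :
    (ρc.word k).length = s k + 1 - bstart s k := by
  rw [(h.1 k hk).2.2.1]
  simp [blockWord]

theorem getElem?_word (h : IsCompactionWith ρ ρc s) {k j : ℕ} (hk : (k : ℕ∞) < ρc.len)
    (hj : j < (ρc.word k).length) : (ρc.word k)[j]? = some (ρ.act (bstart s k + j)) := by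
  rw [h.word_length hk] at hj
  rw [(h.1 k hk).2.2.1]
  simp [blockWord, List.getElem?_range hj]

theorem index_le (h : IsCompactionWith ρ ρc s) {k j : ℕ} (hk : (k : ℕ∞) < ρc.len)
    (hj : j < (ρc.word k).length) : bstart s k + j ≤ s k := by
  rw [h.word_length hk] at hj
  omega

theorem index_lt_len (h : IsCompactionWith ρ ρc s) {k j : ℕ} (hk : (k : ℕ∞) < ρc.len)
    (hj : j < (ρc.word k).length) : ((bstart s k + j : ℕ) : ℕ∞) < ρ.len :=
  lt_of_le_of_lt (by exact_mod_cast h.index_le hk hj) (h.1 k hk).1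

theorem time_index (h : IsCompactionWith ρ ρc s) {k j : ℕ} (hk : (k : ℕ∞) < ρc.len)
    (hj : j < (ρc.word k).length) : ρ.time (bstart s k + j) = ρc.time k := by
  rw [(h.1 k hk).2.1]
  exact (h.1 k hk).2.2.2 _ (Nat.le_add_right _ _) (h.index_le hk hj)

theorem exists_index (h : IsCompactionWith ρ ρc s) {i : ℕ} (hi : (i : ℕ∞) < ρ.len) :
    ∃ k j : ℕ, (k : ℕ∞) < ρc.len ∧ j < (ρc.word k).length ∧ bstart s k + j = i := by
  obtain ⟨k, hk, h1, h2⟩ := h.2.2 i hi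
  refine ⟨k, i - bstart s k, hk, ?_, by omega⟩
  rw [h.word_length hk]
  omega

theorem end_lt_bstart (h : IsCompactionWith ρ ρc s) {k l : ℕ} (hkl : k < l)
    (hl : (l : ℕ∞) < ρc.len) : s k < bstart s l := by
  induction l with
  | zero => omega
  | succ l ih =>
    rcases (Nat.lt_succ_iff.mp hkl).eq_or_lt with rfl | hlt
    · exact Nat.lt_succ_self _
    · have hl' : (l : ℕ∞) < ρc.len :=
        lt_trans (by exact_mod_cast Nat.lt_succ_self l) hl
      have h0 := ih hlt hl'
      have h1 := h.index_le (j := 0) hl' (List.length_pos_of_ne_nil (ρc.word_ne l hl'))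
      change s k < s l + 1
      omega

/-- Flattening `(τ̃_k, j) ↦ bstart s k + j` is a strict order embedding of the block positions
of `ρc` into the indices of `ρ`; it is onto by `exists_index`. -/
theorem lexLt_iff (h : IsCompactionWith ρ ρc s) {k j l m : ℕ} (hk : (k : ℕ∞) < ρc.len)
    (hj : j < (ρc.word k).length) (hl : (l : ℕ∞) < ρc.len) (hm : m < (ρc.word l).length) :
    LexLt (ρc.time k) j (ρc.time l) m ↔ bstart s k + j < bstart s l + m := by
  have hkj := h.index_le hk hj
  have hlm := h.index_le hl hm
  unfold LexLt
  rcases lt_trichotomy k l with hlt | rfl | hgt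
  · have h1 := h.end_lt_bstart hlt hl
    exact ⟨fun _ => by omega, fun _ => Or.inl (ρc.strict k l hlt hl)⟩
  · simp
  · have h1 := h.end_lt_bstart hgt hk
    have h2 := ρc.strict l k hgt hk
    constructor
    · rintro (h3 | ⟨h3, -⟩) <;> linarith
    · intro; omega

/-! ### Correctness of the compilation -/

/-- The inductive statement behind the theorem: `⟨φ⟩` at position `j` of the `k`-th block means
`φ` at the corresponding index of the timed word. -/
theorem mxSat_pcompile_iff (h : IsCompactionWith ρ ρc s) (φ : MTL A) :
    ∀ {k j : ℕ}, (k : ℕ∞) < ρc.len → j < (ρc.word k).length →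
      (mxSat ρc (pcompile φ) (ρc.time k) j ↔ pwSat ρ φ (bstart s k + j)) := by
  induction φ with
  | atom a =>
    intro k j hk hj
    simp only [pcompile, mxSat, pwSat, ρc.atTime_time hk, h.getElem?_word hk hj,
      Option.some.injEq]
  | neg φ ih =>
    intro k j hk hj
    simp only [pcompile, mxSat, pwSat, ρc.atTime_time hk, ih hk hj]
    exact and_iff_right (ρc.word_ne k hk)
  | conj φ ψ ihφ ihψ =>
    intro k j hk hj
    simp only [pcompile, mxSat, pwSat, ρc.atTime_time hk, ihφ hk hj, ihψ hk hj]
    exact and_iff_right (ρc.word_ne k hk)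
  | untl φ I ψ ihφ ihψ =>
    intro k j hk hj
    simp only [pcompile, MTLS.disj, mxSat, pwSat]
    rw [ρc.atTime_time hk, and_iff_right (ρc.word_ne k hk)]
    constructor
    · rintro ⟨t₁, j₁, hlt, hadm, hI, ⟨hψ, hsig⟩, hφ⟩
      obtain ⟨l, hl, rfl, hj₁⟩ := hadm.exists_block hsig
      refine ⟨bstart s l + j₁, (h.lexLt_iff hk hj hl hj₁).1 hlt, h.index_lt_len hl hj₁, ?_,
        (ihψ hl hj₁).1 hψ, fun i hi₁ hi₂ => ?_⟩
      · rwa [h.time_index hl hj₁, h.time_index hk hj]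
      · have hi : (i : ℕ∞) < ρ.len :=
          lt_trans (by exact_mod_cast hi₂) (h.index_lt_len hl hj₁)
        obtain ⟨m, j₂, hm, hj₂, rfl⟩ := h.exists_index hi
        by_contra hcon
        refine hφ (ρc.time m) j₂ ((h.lexLt_iff hk hj hm hj₂).2 hi₁)
          ((h.lexLt_iff hm hj₂ hl hj₁).2 hi₂) (ρc.adm_time hm hj₂)
          ⟨fun hsat => hcon ((ihφ hm hj₂).1 hsat), ?_⟩
        rw [ρc.atTime_time hm, not_not]
        exact ρc.word_ne m hm
    · rintro ⟨i, hi, hlen, hI, hψ, hφ⟩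
      obtain ⟨l, j₁, hl, hj₁, rfl⟩ := h.exists_index hlen
      refine ⟨ρc.time l, j₁, (h.lexLt_iff hk hj hl hj₁).2 hi, ρc.adm_time hl hj₁, ?_,
        ⟨(ihψ hl hj₁).2 hψ, ?_⟩, ?_⟩
      · rwa [h.time_index hl hj₁, h.time_index hk hj] at hI
      · rw [ρc.atTime_time hl]
        exact ρc.word_ne l hl
      · rintro t₂ j₂ hlt₁ hlt₂ hadm ⟨hn, hsig⟩
        -- Intermediate positions at silent times satisfy `¬φ_Σ`; the others lie in a block.
        obtain ⟨m, hm, rfl, hj₂⟩ := hadm.exists_block (not_not.1 hsig)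
        exact hn ((ihφ hm hj₂).2 (hφ _ ((h.lexLt_iff hk hj hm hj₂).1 hlt₁)
          ((h.lexLt_iff hm hj₂ hl hj₁).1 hlt₂)))

end IsCompactionWith

theorem atTime_ne_of_mxSat_pcompile {A : Type} {ρc : CompactTW A} {φ : MTL A} {t : ℝ} {j : ℕ}
    (h : mxSat ρc (pcompile φ) t j) : ρc.atTime t ≠ [] := by
  cases φ with
  | atom a =>
    intro h0
    simp [pcompile, mxSat, h0] at h
  | neg φ => exact h.1
  | conj φ ψ => exact h.1
  | untl φ I ψ => exact h.1

/-- at the initial position, `⟨·⟩` translates pointwise semantics into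
mixed semantics: if `τ̃₀ = 0` then `ρ̃,0,0 ⊨_mx ⟨φ⟩ ↔ C⁻¹(ρ̃),0 ⊨_pw φ`, and if
`τ̃₀ ≠ 0` then `ρ̃,0,0 ⊭_mx ⟨φ⟩`. -/
theorem pcompile_initial (A : Type) [Fintype A] (φ : MTL A) (ρ : TimedWord A)
    (ρc : CompactTW A) (hC : IsCompaction ρ ρc) (hne : (0 : ℕ∞) < ρc.len) :
    (ρc.time 0 = 0 → (mxSat ρc (pcompile φ) 0 0 ↔ pwSat ρ φ 0)) ∧
    (ρc.time 0 ≠ 0 → ¬ mxSat ρc (pcompile φ) 0 0) := by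
  obtain ⟨s, hs⟩ := hC
  constructor
  · intro h0
    have key := hs.mxSat_pcompile_iff φ (k := 0) (j := 0) hne
      (List.length_pos_of_ne_nil (ρc.word_ne 0 hne))
    rw [h0] at key
    exact key
  · intro h0 hsat
    obtain ⟨k, hk, hk0⟩ := ρc.exists_of_atTime_ne (atTime_ne_of_mxSat_pcompile hsat)
    have hpos : 0 < ρc.time 0 := lt_of_le_of_ne (ρc.nonneg 0 hne) (Ne.symm h0)
    rcases Nat.eq_zero_or_pos k with rfl | hkpos
    · exact h0 hk0
    · linarith [ρc.strict 0 k hkpos hk]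
end

section
/- The interval-based language of the formula γ₂ = ◇_{(0,1]}(◇_{[0,1)} b ∧ ◇_{[1,1]} c) is exactly the set B: an infinite timed word ρ = (σ, τ) satisfies ρ, 0 ⊨_itw γ₂ if and only if there exist positions i < j with τ_i ∈ (0,2), σ_i = b, τ_j ∈ (1,2], σ_j = c, and τ_j − τ_i ∈ (0,1). -/
theorem itwSat_ev_iff {A : Type} (ρ : TimedWord A) (hinf : ρ.len = ⊤) (b : A)
    (I : TimeIntv) (φ : MTL A) (t : ℝ) (ht : 0 ≤ t) :
    itwSat ρ (ev b I φ) t ↔ ∃ t' : ℝ, t < t' ∧ I.mem (t' - t) ∧ itwSat ρ φ t' := by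
  constructor
  · rintro ⟨t', h1, -, h2, h3, -⟩
    exact ⟨t', h1, h2, h3⟩
  · rintro ⟨t', h1, h2, h3⟩
    exact ⟨t', h1, ⟨by linarith, fun h => absurd hinf h⟩, h2, h3,
      fun t'' _ _ h => h.2 h.1⟩

theorem TimeIntv.mem_one_iff (lo : ℕ) (l h : Bool) (x : ℝ) :
    TimeIntv.mem ⟨lo, (1 : ℕ∞), l, h⟩ x ↔
      (if l then (lo : ℝ) < x else (lo : ℝ) ≤ x) ∧ (if h then x < 1 else x ≤ 1) := by
  constructor
  · rintro ⟨h1, h2⟩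
    exact ⟨h1, by simpa using h2 1 (by simp)⟩
  · rintro ⟨h1, h2⟩
    refine ⟨h1, fun n hn => ?_⟩
    have hn' : n = 1 := by
      have : (1 : ℕ∞) = (n : ℕ∞) := hn
      exact_mod_cast this.symm
    subst hn'
    simpa using h2

/-- the interval-based language of `γ₂` is exactly the set `B`. -/
theorem gamma2_language (A : Type) [Fintype A] (b c : A) (hbc : b ≠ c)
    (ρ : TimedWord A) (hinf : ρ.len = ⊤) :
    itwSat ρ (gamma2 b c) 0 ↔
      ∃ i j : ℕ, i < j ∧ 0 < ρ.time i ∧ ρ.time i < 2 ∧ ρ.act i = b ∧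
        1 < ρ.time j ∧ ρ.time j ≤ 2 ∧ ρ.act j = c ∧
        0 < ρ.time j - ρ.time i ∧ ρ.time j - ρ.time i < 1 := by
  have lt_top : ∀ i : ℕ, (i : ℕ∞) < ρ.len := fun i => hinf ▸ ENat.natCast_lt_top i
  rw [gamma2, itwSat_ev_iff ρ hinf _ _ _ _ le_rfl]
  constructor
  · rintro ⟨t, ht, hm, hb, hc⟩
    rw [itwSat_ev_iff ρ hinf _ _ _ _ ht.le] at hb hc
    obtain ⟨_, hb1, hb2, i, -, hi, rfl⟩ := hb
    obtain ⟨_, hc1, hc2, j, -, hj, rfl⟩ := hc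
    rw [TimeIntv.mem_one_iff] at hm hb2 hc2
    simp at hm hb2 hc2
    have hij : i < j := by
      by_contra h
      have := ρ.mono j i (not_lt.mp h) (lt_top i)
      linarith [hb2.2, hc2.1]
    refine ⟨i, j, hij, ?_, ?_, hi, ?_, ?_, hj, ?_, ?_⟩ <;>
      linarith [hm.1, hm.2, hb2.1, hb2.2, hc2.1, hc2.2]
  · rintro ⟨i, j, -, hi0, -, hi, hj1, hj2, hj, h0, h1⟩
    -- The outer witness is forced: `c` has to occur exactly one time unit later.
    have ht : 0 < ρ.time j - 1 := by linarith
    refine ⟨ρ.time j - 1, ht, ?_, ?_, ?_⟩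
    · rw [TimeIntv.mem_one_iff]
      simp
      constructor <;> linarith
    · rw [itwSat_ev_iff ρ hinf _ _ _ _ ht.le]
      refine ⟨ρ.time i, by linarith, ?_, i, lt_top i, hi, rfl⟩
      rw [TimeIntv.mem_one_iff]
      simp
      constructor <;> linarith
    · rw [itwSat_ev_iff ρ hinf _ _ _ _ ht.le]
      refine ⟨ρ.time j, by linarith, ?_, j, lt_top j, hj, rfl⟩
      rw [TimeIntv.mem_one_iff]
      simp
end

section
/- The mixed semantics can express the interval-based language of γ₂ = ◇_{(0,1]}(◇_{[0,1)} b ∧ ◇_{[1,1]} c): there exists a formula γ₃ (of MTL extended with the atom β) such that L_itw(γ₂) = { C⁻¹(ρ̃) | ρ̃ ∈ L_mx(γ₃) }, where L_itw(γ₂) is the set of infinite timed words ρ with ρ,0 ⊨_itw γ₂ and L_mx(γ₃) is the set of infinite compact timed words ρ̃ with ρ̃,0,0 ⊨_mx γ₃. -/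
theorem CompactTW.time_injective {A : Type} {ρc : CompactTW A} (hc : ρc.len = ⊤) :
    Function.Injective ρc.time := by
  have h : StrictMono ρc.time := fun i j hij => ρc.strict i j hij (by simp [hc])
  exact h.injective

theorem CompactTW.mem_atTime {A : Type} {ρc : CompactTW A} (hc : ρc.len = ⊤) (a : A) (t : ℝ) :
    a ∈ ρc.atTime t ↔ ∃ k : ℕ, ρc.time k = t ∧ a ∈ ρc.word k := by
  unfold CompactTW.atTime
  split_ifs with h
  · refine ⟨fun ha => ⟨h.choose, h.choose_spec.2, ha⟩, ?_⟩
    rintro ⟨k, hk, ha⟩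
    have : h.choose = k := CompactTW.time_injective hc (h.choose_spec.2.trans hk.symm)
    rwa [this]
  · refine ⟨fun ha => by simp at ha, ?_⟩
    rintro ⟨k, hk, -⟩
    exact absurd ⟨k, by simp [hc], hk⟩ h

/-- The letters of `C(ρ)(t)` are exactly the actions of `ρ` with timestamp `t`. -/
theorem mem_atTime_iff {A : Type} {ρ : TimedWord A} {ρc : CompactTW A}
    (h : IsCompaction ρ ρc) (hc : ρc.len = ⊤) (a : A) (t : ℝ) :
    a ∈ ρc.atTime t ↔ ∃ i : ℕ, (i : ℕ∞) < ρ.len ∧ ρ.act i = a ∧ ρ.time i = t := by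
  obtain ⟨s, h1, -, h3⟩ := h
  rw [CompactTW.mem_atTime hc]
  constructor
  · rintro ⟨k, rfl, ha⟩
    obtain ⟨hs, ht, hw, hconst⟩ := h1 k (by simp [hc])
    rw [hw] at ha
    simp only [blockWord, List.mem_map, List.mem_range] at ha
    obtain ⟨m, hm, rfl⟩ := ha
    have hle : bstart s k + m ≤ s k := by omega
    refine ⟨bstart s k + m, lt_of_le_of_lt (by exact_mod_cast hle) hs, rfl, ?_⟩
    rw [ht]
    exact hconst _ (by omega) hle
  · rintro ⟨i, hi, rfl, rfl⟩
    obtain ⟨k, hk, hki, hik⟩ := h3 i hi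
    obtain ⟨-, ht, hw, hconst⟩ := h1 k hk
    refine ⟨k, by rw [ht, hconst i hki hik], ?_⟩
    rw [hw]
    simp only [blockWord, List.mem_map, List.mem_range]
    exact ⟨i - bstart s k, by omega, by congr 1; omega⟩

theorem len_eq_top {A : Type} {ρ : TimedWord A} {ρc : CompactTW A}
    (h : IsCompaction ρ ρc) (hc : ρc.len = ⊤) : ρ.len = ⊤ := by
  obtain ⟨s, h1, h2, -⟩ := h
  have hmono : StrictMono s := strictMono_nat_of_lt_succ fun k => h2 k (by simp [hc])
  refine ENat.eq_top_iff_forall_gt.2 fun n => ?_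
  exact lt_of_le_of_lt (by exact_mod_cast hmono.id_le n) (h1 n (by simp [hc])).1

theorem mxSatB_disj {A : Type} (ρc : CompactTW A) (φ ψ : MTLB A) (t : ℝ) (j : ℕ) :
    mxSatB ρc (MTLB.disj φ ψ) t j ↔ mxSatB ρc φ t j ∨ mxSatB ρc ψ t j := by
  simp only [MTLB.disj, mxSatB]
  tauto

theorem mxSatB_top {A : Type} (ρc : CompactTW A) (t : ℝ) (j : ℕ) :
    mxSatB ρc MTLB.top t j := by
  simp [MTLB.top, mxSatB]

theorem mxSatB_icompile_atom {A : Type} {ρc : CompactTW A} (hc : ρc.len = ⊤) (a : A) {t : ℝ}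
    (ht : 0 ≤ t) : mxSatB ρc (icompile (.atom a)) t 0 ↔ a ∈ ρc.atTime t := by
  rw [icompile, mxSatB_disj]
  constructor
  · rintro (h | ⟨t₁, j₁, -, -, hI, ha, -⟩)
    · exact List.mem_of_getElem? h
    · have h1 := hI.1
      have h2 := hI.2 0 rfl
      simp only [Bool.false_eq_true, if_false, Nat.cast_zero] at h1 h2
      obtain rfl : t₁ = t := by linarith
      exact List.mem_of_getElem? ha
  · intro ha
    obtain ⟨j, hj⟩ := List.mem_iff_getElem?.1 ha
    obtain ⟨hlt, -⟩ := List.getElem?_eq_some_iff.1 hj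
    rcases Nat.eq_zero_or_pos j with rfl | hpos
    · exact Or.inl hj
    · refine Or.inr ⟨t, j, Or.inr ⟨rfl, hpos⟩, ⟨ht, by simp [hc], by omega⟩, ?_, hj,
        fun _ _ _ _ _ => mxSatB_top _ _ _⟩
      refine ⟨by simp, fun n _ => ?_⟩
      simp

/-- Correctness of the interval compilation on infinite words: time `t` corresponds to the
position `(t, 0)`. -/
theorem itwSat_iff_mxSatB {A : Type} {ρ : TimedWord A} {ρc : CompactTW A}
    (h : IsCompaction ρ ρc) (hc : ρc.len = ⊤) (φ : MTL A) :
    ∀ t : ℝ, 0 ≤ t → (itwSat ρ φ t ↔ mxSatB ρc (icompile φ) t 0) := by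
  have hρ := len_eq_top h hc
  induction φ with
  | atom a =>
    intro t ht
    rw [mxSatB_icompile_atom hc a ht, mem_atTime_iff h hc]
    rfl
  | neg φ ih =>
    intro t ht
    exact not_congr (ih t ht)
  | conj φ ψ ih₁ ih₂ =>
    intro t ht
    exact and_congr (ih₁ t ht) (ih₂ t ht)
  | untl φ I ψ ih₁ ih₂ =>
    intro t ht
    simp only [icompile, itwSat, mxSatB]
    constructor
    · rintro ⟨t', htt', -, hI, hψ, hφ⟩
      have ht' : 0 ≤ t' := by linarith
      refine ⟨t', 0, Or.inl htt', ⟨ht', by simp [hc], by simp⟩, hI,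
        ⟨rfl, (ih₂ t' ht').1 hψ⟩, ?_⟩
      intro t₂ j₂ hl hr hadm
      rw [mxSatB_disj]
      by_cases hj : j₂ = 0
      · subst hj
        refine Or.inr ((ih₁ t₂ hadm.1).1 (hφ t₂ ?_ ?_))
        · rcases hl with hl | hl
          · exact hl
          · exact absurd hl.2 (lt_irrefl _)
        · rcases hr with hr | hr
          · exact hr
          · exact absurd hr.2 (lt_irrefl _)
      · exact Or.inl hj
    · rintro ⟨t', j, hl, hadm, hI, ⟨rfl, hψ⟩, hφ⟩
      have htt' : t < t' := by
        rcases hl with hl | hl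
        · exact hl
        · exact absurd hl.2 (lt_irrefl _)
      refine ⟨t', htt', ⟨hadm.1, by simp [hρ]⟩, hI, (ih₂ t' hadm.1).2 hψ, ?_⟩
      intro t₂ h1 h2
      have ht₂ : 0 ≤ t₂ := by linarith
      have := hφ t₂ 0 (Or.inl h1) (Or.inl h2) ⟨ht₂, by simp [hc], by simp⟩
      rw [mxSatB_disj] at this
      rcases this with hb | hb
      · exact absurd rfl hb
      · exact (ih₁ t₂ ht₂).2 hb

/-- Every infinite timed word has an infinite compaction. -/
theorem exists_isCompaction {A : Type} (ρ : TimedWord A) (hρ : ρ.len = ⊤) :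
    ∃ ρc : CompactTW A, IsCompaction ρ ρc ∧ ρc.len = ⊤ := by
  classical
  have hmono : Monotone ρ.time := fun i j hij => ρ.mono i j hij (by simp [hρ])
  have hex : ∀ i : ℕ, ∃ j, ρ.time i < ρ.time j := fun i => ρ.div hρ _
  -- `st k` is the first index of the `k`-th block: the next block starts at the least index
  -- with a strictly larger timestamp, which exists by time divergence.
  let st : ℕ → ℕ := fun k => Nat.rec 0 (fun _ i => Nat.find (hex i)) k
  have st_succ : ∀ k, st (k + 1) = Nat.find (hex (st k)) := fun _ => rfl
  have hlt : ∀ k, ρ.time (st k) < ρ.time (st (k + 1)) := fun k => by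
    rw [st_succ]; exact Nat.find_spec (hex (st k))
  have hle : ∀ k i, i < st (k + 1) → ρ.time i ≤ ρ.time (st k) := fun k i hi => by
    rw [st_succ] at hi; exact not_lt.1 (Nat.find_min (hex (st k)) hi)
  have hst : StrictMono st := strictMono_nat_of_lt_succ fun k => hmono.reflect_lt (hlt k)
  have htime : StrictMono fun k => ρ.time (st k) := strictMono_nat_of_lt_succ hlt
  let s : ℕ → ℕ := fun k => st (k + 1) - 1
  have hs : ∀ k, s k + 1 = st (k + 1) := fun k => by
    have := hst (Nat.lt_add_one k)
    change st (k + 1) - 1 + 1 = st (k + 1)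
    omega
  have hb : ∀ k, bstart s k = st k := fun k => by
    cases k with
    | zero => rfl
    | succ k => exact hs k
  have hbs : ∀ k, st k ≤ s k := fun k => by
    have := hst (Nat.lt_add_one k)
    have := hs k
    omega
  have hconst : ∀ k i, st k ≤ i → i ≤ s k → ρ.time i = ρ.time (st k) := fun k i h1 h2 => by
    have := hs k
    exact le_antisymm (hle k i (by omega)) (hmono h1)
  refine ⟨⟨⊤, blockWord ρ s, fun k => ρ.time (st k), fun i _ => ρ.nonneg _ (by simp [hρ]),
    fun k _ => ?_, fun i j hij _ => htime hij, fun _ M => ?_⟩, ⟨s, ?_, ?_, ?_⟩, rfl⟩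
  · have := hbs k
    rw [← List.length_pos_iff]
    simp only [blockWord, List.length_map, List.length_range, hb]
    omega
  · obtain ⟨i, hi⟩ := ρ.div hρ M
    exact ⟨i, hi.trans_le (hmono (hst.id_le i))⟩
  · intro k _
    have hk := hconst k (s k) (hbs k) le_rfl
    refine ⟨by simp [hρ], hk.symm, rfl, fun i h1 h2 => ?_⟩
    rw [hb] at h1
    rw [hk, hconst k i h1 h2]
  · intro k _
    have := hst (Nat.lt_add_one (k + 1))
    have := hs k
    have := hs (k + 1)
    omega
  · intro i _
    -- the block containing `i` is the one before the first block that starts after `i`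
    have hi : ∃ k, i < st (k + 1) := ⟨i, hst.id_le (i + 1)⟩
    refine ⟨Nat.find hi, by simp, ?_, ?_⟩
    · rw [hb]
      rcases hk : Nat.find hi with _ | k
      · exact Nat.zero_le _
      · exact not_lt.1 (Nat.find_min hi (m := k) (by omega))
    · have h1 := Nat.find_spec hi
      have h2 := hs (Nat.find hi)
      omega

/-- the mixed semantics expresses the interval-based language of `γ₂`:
there is `γ₃` (MTL extended with `β`) with `L_itw(γ₂) = { C⁻¹(ρ̃) | ρ̃ ∈ L_mx(γ₃) }`. -/
theorem mixed_expresses_gamma2 (A : Type) [Fintype A] (b c : A) (hbc : b ≠ c) :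
    ∃ γ₃ : MTLB A,
      {ρ : TimedWord A | ρ.len = ⊤ ∧ itwSat ρ (gamma2 b c) 0} =
      {ρ : TimedWord A | ∃ ρc : CompactTW A,
        IsCompaction ρ ρc ∧ ρc.len = ⊤ ∧ mxSatB ρc γ₃ 0 0} := by
  refine ⟨icompile (gamma2 b c), Set.ext fun ρ => ⟨?_, ?_⟩⟩
  · rintro ⟨hρ, hsat⟩
    obtain ⟨ρc, h, hc⟩ := exists_isCompaction ρ hρ
    exact ⟨ρc, h, hc, (itwSat_iff_mxSatB h hc _ 0 le_rfl).1 hsat⟩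
  · rintro ⟨ρc, h, hc, hsat⟩
    exact ⟨len_eq_top h hc, (itwSat_iff_mxSatB h hc _ 0 le_rfl).2 hsat⟩
end

section
/- No interval-based MTL formula defines the language M = B ∪ (Z ∩ G): for every MTL formula φ, L_itw(φ) ≠ M. -/
/-- Infinite timed words with the same actions at each time point, in whatever order, satisfy the
same formulas under the interval-based semantics. -/
theorem itwSat_congr {A : Type} (ρ₁ ρ₂ : TimedWord A) (h₁ : ρ₁.len = ⊤) (h₂ : ρ₂.len = ⊤)
    (h : ∀ x t, (∃ i, ρ₁.act i = x ∧ ρ₁.time i = t) ↔ ∃ i, ρ₂.act i = x ∧ ρ₂.time i = t)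
    (φ : MTL A) : ∀ t, itwSat ρ₁ φ t ↔ itwSat ρ₂ φ t := by
  induction φ with
  | atom x => intro t; simpa [itwSat, h₁, h₂] using h x t
  | neg φ ih => intro t; simp only [itwSat, ih]
  | conj φ ψ ih₁ ih₂ => intro t; simp only [itwSat, ih₁, ih₂]
  | untl φ I ψ ih₁ ih₂ =>
    intro t; simp only [itwSat, ih₁, ih₂, TimedWord.inDom, h₁, h₂, ne_eq, not_true, false_imp_iff]

/-- Timestamps `0, 3, 3, 4, 5, …`. -/
noncomputable def twinTime (i : ℕ) : ℝ := if i = 0 then 0 else if i = 1 then 3 else (i : ℝ) + 1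

/-- The infinite timed word `(c,0) (x,3) (y,3) (c,4) (c,5) …`. -/
noncomputable def twinWord {A : Type} (c x y : A) : TimedWord A where
  len := ⊤
  act i := if i = 1 then x else if i = 2 then y else c
  time := twinTime
  nonneg i _ := by unfold twinTime; split_ifs <;> positivity
  mono i j hij _ := by
    have hc : (i : ℝ) ≤ j := by exact_mod_cast hij
    unfold twinTime
    split_ifs with h1 h2 h3 h4 h5 h6 h7 <;> first | omega | linarith | skip
    all_goals
      have : (2 : ℝ) ≤ j := by exact_mod_cast (by omega : 2 ≤ j)
      linarith
  div _ M := by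
    obtain ⟨n, hn⟩ := exists_nat_gt M
    refine ⟨n + 2, ?_⟩
    simp only [twinTime, Nat.add_eq_zero_iff, OfNat.ofNat_ne_zero, and_false, if_false]
    push_cast
    linarith

theorem twinTime_gap (i : ℕ) : ¬ (0 < twinTime i ∧ twinTime i ≤ 2) := by
  unfold twinTime
  split_ifs with h0 h1
  · simp
  · norm_num
  · have : (2 : ℝ) ≤ i := by exact_mod_cast (by omega : 2 ≤ i)
    rintro ⟨-, h⟩
    linarith

/-- Swapping the two simultaneous actions at time `3` loses no occurrence. -/
theorem twinWord_swap {A : Type} (c x y z : A) (t : ℝ)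
    (h : ∃ i, (twinWord c x y).act i = z ∧ (twinWord c x y).time i = t) :
    ∃ i, (twinWord c y x).act i = z ∧ (twinWord c y x).time i = t := by
  obtain ⟨i, rfl, rfl⟩ := h
  by_cases h1 : i = 1
  · subst h1
    exact ⟨2, by simp [twinWord], by simp [twinWord, twinTime]; norm_num⟩
  by_cases h2 : i = 2
  · subst h2
    exact ⟨1, by simp [twinWord], by simp [twinWord, twinTime]; norm_num⟩
  · exact ⟨i, by simp [twinWord, h1, h2], rfl⟩

/-- no interval-based MTL formula defines `M = B ∪ (Z ∩ G)`. -/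
theorem no_itw_defines_M (A : Type) [Fintype A] (a b c : A)
    (hab : a ≠ b) (hac : a ≠ c) (hbc : b ≠ c) (φ : MTL A) :
    {ρ : TimedWord A | ρ.len = ⊤ ∧ itwSat ρ φ 0} ≠
      Bset b c ∪ (Zset a b ∩ Gset) := by
  intro hM
  have hsat := itwSat_congr (twinWord c b a) (twinWord c a b) rfl rfl
    (fun z t => ⟨twinWord_swap c b a z t, twinWord_swap c a b z t⟩) φ 0
  have hba : twinWord c b a ∈ Bset b c ∪ (Zset a b ∩ Gset) :=
    Or.inr ⟨⟨rfl, 1, le_rfl, by simp [twinWord], by simp [twinWord]⟩, rfl, twinTime_gap⟩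
  rw [← hM] at hba
  have hmem : twinWord c a b ∈ {ρ : TimedWord A | ρ.len = ⊤ ∧ itwSat ρ φ 0} :=
    ⟨rfl, hsat.1 hba.2⟩
  rw [hM] at hmem
  rcases hmem with ⟨-, i, j, -, hi0, hi2, -⟩ | ⟨⟨-, i, -, hb, ha⟩, -⟩
  · exact twinTime_gap i ⟨hi0, hi2.le⟩
  · -- The only `b` of the second word stands at index `2`, and a `c` follows it.
    have hi : i = 2 := by
      by_contra h2
      by_cases h1 : i = 1
      · exact hab (by simpa [twinWord, h1] using hb)
      · exact hbc (by simpa [twinWord, h1, h2] using hb.symm)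
    subst hi
    exact hac (by simpa [twinWord] using ha.symm)
end
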